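/- Let G be a finite simple graph without isolated vertices with β(G)/α(G) = 5/4 (i.e., 4·β(G) = 5·α(G)), and let F be any spanning S-forest of G. Suppose u is a vertex of degree 1 in F, w is the base of u, and (u, w) is an edge of G (not in F). Then the vertex v of degree 2 in F that is adjacent to u in F is incident to no edge from B(G, F); equivalently, every edge of G incident to v belongs to F, so v has degree 2 in G. -/

import Mathlib

/-!
Write `k` for the number of components of `F`. Since `F` spans `10 * k` vertices, `β(G) ≤ 5 * k`, so
`α(G) ≤ 4 * k`. On the other hand each spanner has two disjoint matchings of size `4`. Suppose that
`v` had a `G`-neighbor outside `F`. Inside the one or two spanners containing `v` and that neighbor,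
the triangle `u v w` together with the extra edge allows one to replace these matchings by disjoint
ones of sizes `5, 3`, respectively `9, 7`. Keeping the standard matchings in the other components
yields a pair with `|H| = 4 * k + 1` and `|H| + |H'| = 8 * k`. Then either this pair attains `λ(G)`,
or `λ(G) > 8 * k` and the larger member of an optimal pair exceeds `4 * k`; both force
`α(G) > 4 * k`.
-/

open SimpleGraph

/-- A matching of `G`, given as a finite set of edges of `G` that are pairwise non-adjacent. -/
def IsMatchingE {V : Type*} (G : SimpleGraph V) (M : Finset (Sym2 V)) : Prop :=
  ↑M ⊆ G.edgeSet ∧ ∀ e ∈ M, ∀ f ∈ M, e ≠ f → ∀ v : V, ¬(v ∈ e ∧ v ∈ f)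

/-- A vertex is covered by a set of edges if some edge of it is incident to the vertex. -/
def Covers {V : Type*} (M : Finset (Sym2 V)) (v : V) : Prop := ∃ e ∈ M, v ∈ e

/-- `β(G)`: the maximum size of a matching of `G`. -/
noncomputable def gBeta {V : Type*} (G : SimpleGraph V) : ℕ :=
  sSup {n | ∃ M : Finset (Sym2 V), IsMatchingE G M ∧ M.card = n}

/-- `λ(G)`: the maximum of `|H| + |H'|` over pairs `(H, H')` of disjoint matchings of `G`. -/
noncomputable def gLam {V : Type*} (G : SimpleGraph V) : ℕ :=
  sSup {n | ∃ H H' : Finset (Sym2 V), IsMatchingE G H ∧ IsMatchingE G H' ∧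
    Disjoint H H' ∧ H.card + H'.card = n}

/-- `α(G)`: the maximum of `|H|` over pairs `(H, H')` of disjoint matchings of `G`
with `|H| + |H'| = λ(G)`. -/
noncomputable def gAlpha {V : Type*} (G : SimpleGraph V) : ℕ :=
  sSup {n | ∃ H H' : Finset (Sym2 V), IsMatchingE G H ∧ IsMatchingE G H' ∧
    Disjoint H H' ∧ H.card + H'.card = gLam G ∧ H.card = n}

/-- `β₁(G)`: the maximum of `β(G \ F)` over maximum matchings `F` of `G`. -/
noncomputable def gBeta1 {V : Type*} (G : SimpleGraph V) : ℕ :=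
  sSup {n | ∃ F : Finset (Sym2 V), IsMatchingE G F ∧ F.card = gBeta G ∧
    gBeta (G.deleteEdges ↑F) = n}

/-- Membership in `M₂(G)`: `(H, H')` is a pair of disjoint matchings of `G` with
`|H| + |H'| = λ(G)` and `|H| = α(G)`. -/
def InM2 {V : Type*} (G : SimpleGraph V) (H H' : Finset (Sym2 V)) : Prop :=
  IsMatchingE G H ∧ IsMatchingE G H' ∧ Disjoint H H' ∧
  H.card + H'.card = gLam G ∧ H.card = gAlpha G

/-- Membership in `M₂(G, M)`: pairs from `M₂(G)` maximizing `|M ∩ (H ∪ H')|`. -/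
def InM2M {V : Type*} [DecidableEq V] (G : SimpleGraph V) (M H H' : Finset (Sym2 V)) : Prop :=
  InM2 G H H' ∧ ∀ K K' : Finset (Sym2 V), InM2 G K K' →
    (M ∩ (K ∪ K')).card ≤ (M ∩ (H ∪ H')).card

/-- The degree of a vertex `v` in the graph `F`. -/
noncomputable def fdeg {V : Type*} (F : SimpleGraph V) (v : V) : ℕ := (F.neighborSet v).ncard

/-- The spanner: two paths `a₁a₂a₃a₄a₅` and `b₁b₂b₃b₄b₅` joined by the edge `a₃b₃`.
Vertices `0..4` are `a₁..a₅` and `5..9` are `b₁..b₅`. -/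
def Spanner10 : SimpleGraph (Fin 10) :=
  SimpleGraph.fromEdgeSet
    {s(0, 1), s(1, 2), s(2, 3), s(3, 4), s(5, 6), s(6, 7), s(7, 8), s(8, 9), s(2, 7)}

/-- An S-forest: every connected component is isomorphic to the spanner. -/
def IsSForest {V : Type*} (F : SimpleGraph V) : Prop :=
  ∀ c : F.ConnectedComponent, Nonempty ((F.induce c.supp) ≃g Spanner10)

/-- `U(F)`: edges of `F` incident to a vertex of degree 1. -/
def USet {V : Type*} (F : SimpleGraph V) : Set (Sym2 V) :=
  {e | e ∈ F.edgeSet ∧ ∃ v ∈ e, fdeg F v = 1}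

/-- `L(F)`: edges of `F` not in `U(F)` incident to a vertex of degree 2. -/
def LSet {V : Type*} (F : SimpleGraph V) : Set (Sym2 V) :=
  {e | e ∈ F.edgeSet ∧ e ∉ USet F ∧ ∃ v ∈ e, fdeg F v = 2}

/-- `w` is the base of the 1-vertex `u` of `F`: a 3-vertex at `F`-distance 2 from `u`. -/
def IsBase {V : Type*} (F : SimpleGraph V) (u w : V) : Prop :=
  fdeg F w = 3 ∧ F.dist u w = 2

/-- `Δ(G, F)`: edges of `G` joining a 1-vertex of `F` to its base. -/
def DeltaSet {V : Type*} (G F : SimpleGraph V) : Set (Sym2 V) :=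
  {e | e ∈ G.edgeSet ∧ ∃ u w : V, e = s(u, w) ∧ fdeg F u = 1 ∧ IsBase F u w}

/-- `B(G, F) = E(G) \ (U(F) ∪ L(F) ∪ Δ(G, F))`. -/
def BSet {V : Type*} (G F : SimpleGraph V) : Set (Sym2 V) :=
  G.edgeSet \ (USet F ∪ LSet F ∪ DeltaSet G F)

/-- Condition (a): no 1-vertex of `F` is incident to an edge from `B(G, F)`. -/
def CondA {V : Type*} (G F : SimpleGraph V) : Prop :=
  ∀ v : V, fdeg F v = 1 → ∀ e ∈ BSet G F, v ∉ e

/-- Condition (b): if a 1-vertex `u` of `F` is incident to an edge from `Δ(G, F)`, then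
the 2-vertex of `F` adjacent to `u` in `F` is not incident to any edge from `B(G, F)`. -/
def CondB {V : Type*} (G F : SimpleGraph V) : Prop :=
  ∀ u v : V, fdeg F u = 1 → (∃ e ∈ DeltaSet G F, u ∈ e) →
    F.Adj u v → fdeg F v = 2 → ∀ e ∈ BSet G F, v ∉ e

/-- Condition (c): for every `L(F)`-`B(G, F)` alternating even closed trail of `G`
containing an edge joining two 2-vertices of `F`, the graph formed by its edges belonging
to `B(G, F)` is not bipartite (2-colorable). -/
def CondC {V : Type*} (G F : SimpleGraph V) : Prop :=
  ∀ (n : ℕ) (e : ℕ → Sym2 V),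
    1 ≤ n →
    (∀ i j, i < 2 * n → j < 2 * n → e i = e j → i = j) →
    (∀ i, i < 2 * n → e i ∈ G.edgeSet) →
    (∀ i, i + 1 < 2 * n → ∃ v : V, v ∈ e i ∧ v ∈ e (i + 1)) →
    (∃ v : V, v ∈ e (2 * n - 1) ∧ v ∈ e 0) →
    (∀ i, i < 2 * n → (i % 2 = 0 → e i ∈ LSet F) ∧ (i % 2 = 1 → e i ∈ BSet G F)) →
    (∃ i, i < 2 * n ∧ ∀ v ∈ e i, fdeg F v = 2) →
    ¬ (SimpleGraph.fromEdgeSet {f | ∃ i, i < 2 * n ∧ f = e i ∧ f ∈ BSet G F}).Colorable 2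

section MatchingPair

variable {V W : Type*} {G : SimpleGraph V} {H : SimpleGraph W}

instance [Fintype V] [DecidableEq V] [DecidableRel G.Adj] (M : Finset (Sym2 V)) :
    Decidable (IsMatchingE G M) :=
  decidable_of_iff ((∀ e ∈ M, e ∈ G.edgeSet) ∧
    ∀ e ∈ M, ∀ f ∈ M, e ≠ f → ∀ v : V, ¬(v ∈ e ∧ v ∈ f)) Iff.rfl

lemma IsMatchingE.empty : IsMatchingE G ∅ := by
  simp [IsMatchingE]

lemma IsMatchingE.map {M : Finset (Sym2 V)} (hM : IsMatchingE G M) (f : V ↪ W)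
    (hf : G ≤ H.comap f) : IsMatchingE H (M.map f.sym2Map) := by
  constructor
  · intro e he
    obtain ⟨e, heM, rfl⟩ := Finset.mem_map.1 he
    induction e with | _ a b => exact hf (hM.1 heM)
  · simp only [Finset.forall_mem_map]
    rintro e he e' he' hne _ ⟨hve, hve'⟩
    obtain ⟨a, ha, rfl⟩ := Sym2.mem_map.1 hve
    obtain ⟨b, hb, hab⟩ := Sym2.mem_map.1 hve'
    obtain rfl := f.injective hab
    exact hM.2 e he e' he' (fun h => hne (congrArg _ h)) b ⟨ha, hb⟩

lemma IsMatchingE.union [DecidableEq V] {M N : Finset (Sym2 V)} (hM : IsMatchingE G M)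
    (hN : IsMatchingE G N) (hMN : ∀ v, Covers M v → ¬Covers N v) : IsMatchingE G (M ∪ N) := by
  constructor
  · rw [Finset.coe_union]
    exact Set.union_subset hM.1 hN.1
  · rintro e he e' he' hne v ⟨hve, hve'⟩
    rcases Finset.mem_union.1 he with he | he <;> rcases Finset.mem_union.1 he' with he' | he'
    · exact hM.2 e he e' he' hne v ⟨hve, hve'⟩
    · exact hMN v ⟨e, he, hve⟩ ⟨e', he', hve'⟩
    · exact hMN v ⟨e', he', hve'⟩ ⟨e, he, hve⟩
    · exact hN.2 e he e' he' hne v ⟨hve, hve'⟩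

lemma not_covers_map_sumInr_of_covers_map_sumInl {M : Finset (Sym2 V)} {N : Finset (Sym2 W)}
    (x : V ⊕ W) (hM : Covers (M.map Function.Embedding.inl.sym2Map) x) :
    ¬Covers (N.map Function.Embedding.inr.sym2Map) x := by
  rintro ⟨_, hN, hx'⟩
  obtain ⟨_, hM, hx⟩ := hM
  obtain ⟨e, -, rfl⟩ := Finset.mem_map.1 hM
  obtain ⟨e', -, rfl⟩ := Finset.mem_map.1 hN
  obtain ⟨a, -, rfl⟩ := Sym2.mem_map.1 hx
  obtain ⟨b, -, hb⟩ := Sym2.mem_map.1 hx'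
  exact Sum.inr_ne_inl hb

lemma disjoint_of_not_covers {M N : Finset (Sym2 V)} (hMN : ∀ v, Covers M v → ¬Covers N v) :
    Disjoint M N := by
  rw [Finset.disjoint_left]
  intro e heM heN
  exact hMN _ ⟨e, heM, e.out_fst_mem⟩ ⟨e, heN, e.out_fst_mem⟩

lemma IsMatchingE.two_mul_card_le [Fintype V] {M : Finset (Sym2 V)} (hM : IsMatchingE G M) :
    2 * M.card ≤ Fintype.card V := by
  classical
  have hdisj : (M : Set (Sym2 V)).PairwiseDisjoint Sym2.toFinset := by
    intro e he f hf hne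
    refine Finset.disjoint_left.2 fun v hve hvf => ?_
    exact hM.2 e he f hf hne v ⟨Sym2.mem_toFinset.1 hve, Sym2.mem_toFinset.1 hvf⟩
  calc 2 * M.card = ∑ e ∈ M, e.toFinset.card := by
        rw [Finset.sum_const_nat fun e he =>
          Sym2.card_toFinset_of_not_isDiag e (G.not_isDiag_of_mem_edgeSet (hM.1 he)), mul_comm]
    _ = (M.biUnion Sym2.toFinset).card := (Finset.card_biUnion hdisj).symm
    _ ≤ Fintype.card V := Finset.card_le_univ _

lemma two_mul_gBeta_le_card [Fintype V] : 2 * gBeta G ≤ Fintype.card V := by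
  have h : gBeta G ≤ Fintype.card V / 2 := by
    refine csSup_le' ?_
    rintro _ ⟨M, hM, rfl⟩
    have := hM.two_mul_card_le
    omega
  omega

/-- `G` has a pair `(M, N)` of disjoint matchings with `|M| = p` and `|N| = q`. The pairs over which
`λ(G)` and `α(G)` are maxima are handled through their sizes alone. -/
def HasMatchingPair (G : SimpleGraph V) (p q : ℕ) : Prop :=
  ∃ M N : Finset (Sym2 V), IsMatchingE G M ∧ IsMatchingE G N ∧ Disjoint M N ∧
    M.card = p ∧ N.card = q

namespace HasMatchingPair

variable {p q p' q' : ℕ}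

lemma zero : HasMatchingPair G 0 0 :=
  ⟨∅, ∅, .empty, .empty, Finset.disjoint_empty_left ∅, Finset.card_empty, Finset.card_empty⟩

lemma symm (h : HasMatchingPair G p q) : HasMatchingPair G q p := by
  obtain ⟨M, N, hM, hN, hMN, hp, hq⟩ := h
  exact ⟨N, M, hN, hM, hMN.symm, hq, hp⟩

lemma map (h : HasMatchingPair G p q) (f : V ↪ W) (hf : G ≤ H.comap f) :
    HasMatchingPair H p q := by
  obtain ⟨M, N, hM, hN, hMN, rfl, rfl⟩ := h
  exact ⟨_, _, hM.map f hf, hN.map f hf, (Finset.disjoint_map _).2 hMN,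
    Finset.card_map _, Finset.card_map _⟩

lemma sum (h : HasMatchingPair G p q) (h' : HasMatchingPair H p' q') :
    HasMatchingPair (G ⊕g H) (p + p') (q + q') := by
  classical
  obtain ⟨M, N, hM, hN, hMN, rfl, rfl⟩ := h
  obtain ⟨M', N', hM', hN', hMN', rfl, rfl⟩ := h'
  have hinl : G ≤ (G ⊕g H).comap Function.Embedding.inl := fun _ _ h => h
  have hinr : H ≤ (G ⊕g H).comap Function.Embedding.inr := fun _ _ h => h
  have hdisj (A : Finset (Sym2 V)) (B : Finset (Sym2 W)) :
      Disjoint (A.map Function.Embedding.inl.sym2Map) (B.map Function.Embedding.inr.sym2Map) :=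
    disjoint_of_not_covers not_covers_map_sumInr_of_covers_map_sumInl
  refine ⟨M.map Function.Embedding.inl.sym2Map ∪ M'.map Function.Embedding.inr.sym2Map,
    N.map Function.Embedding.inl.sym2Map ∪ N'.map Function.Embedding.inr.sym2Map,
    (hM.map _ hinl).union (hM'.map _ hinr) not_covers_map_sumInr_of_covers_map_sumInl,
    (hN.map _ hinl).union (hN'.map _ hinr) not_covers_map_sumInr_of_covers_map_sumInl, ?_, ?_, ?_⟩
  · simp only [Finset.disjoint_union_left, Finset.disjoint_union_right, Finset.disjoint_map]
    exact ⟨⟨hMN, (hdisj N M').symm⟩, hdisj M N', hMN'⟩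
  all_goals rw [Finset.card_union_of_disjoint (hdisj _ _), Finset.card_map, Finset.card_map]

end HasMatchingPair

lemma sum_le_comap_sumElim {X : Type*} {K : SimpleGraph X} {f : V → X} {g : W → X}
    (hf : G ≤ K.comap f) (hg : H ≤ K.comap g) : G ⊕g H ≤ K.comap (Sum.elim f g) := by
  rintro (a | a) (b | b) hab
  · exact hf hab
  · simp at hab
  · simp at hab
  · exact hg hab

lemma HasMatchingPair.induce_union {S T : Set V} {p q p' q' : ℕ}
    (h : HasMatchingPair (G.induce S) p q) (h' : HasMatchingPair (G.induce T) p' q')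
    (hST : Disjoint S T) : HasMatchingPair (G.induce (S ∪ T)) (p + p') (q + q') := by
  have hinj : Function.Injective
      (Sum.elim (Set.inclusion (Set.subset_union_left (s := S) (t := T)))
        (Set.inclusion Set.subset_union_right)) :=
    (Set.inclusion_injective _).sumElim (Set.inclusion_injective _) fun a b hab =>
      hST.ne_of_mem a.2 b.2 (congrArg Subtype.val hab)
  exact (h.sum h').map ⟨_, hinj⟩ (sum_le_comap_sumElim (fun _ _ h => h) fun _ _ h => h)

section Finite

variable [Finite V] {p q : ℕ}

lemma HasMatchingPair.two_mul_le_card (h : HasMatchingPair G p q) : 2 * p ≤ Nat.card V := by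
  have := Fintype.ofFinite V
  obtain ⟨M, -, hM, -, -, rfl, -⟩ := h
  rw [Nat.card_eq_fintype_card]
  exact hM.two_mul_card_le

private lemma bddAbove_add_card_matchings :
    BddAbove {n | ∃ M N : Finset (Sym2 V), IsMatchingE G M ∧ IsMatchingE G N ∧
      Disjoint M N ∧ M.card + N.card = n} := by
  refine ⟨Nat.card V, ?_⟩
  rintro _ ⟨M, N, hM, hN, hMN, rfl⟩
  have h : HasMatchingPair G M.card N.card := ⟨M, N, hM, hN, hMN, rfl, rfl⟩
  have := h.two_mul_le_card
  have := h.symm.two_mul_le_card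
  omega

lemma HasMatchingPair.add_le_gLam (h : HasMatchingPair G p q) : p + q ≤ gLam G := by
  obtain ⟨M, N, hM, hN, hMN, rfl, rfl⟩ := h
  exact le_csSup bddAbove_add_card_matchings ⟨M, N, hM, hN, hMN, rfl⟩

lemma exists_hasMatchingPair_add_eq_gLam (G : SimpleGraph V) :
    ∃ p q, HasMatchingPair G p q ∧ p + q = gLam G := by
  have hmem : gLam G ∈ {n | ∃ M N : Finset (Sym2 V), IsMatchingE G M ∧ IsMatchingE G N ∧
      Disjoint M N ∧ M.card + N.card = n} :=
    Nat.sSup_mem ⟨0, ∅, ∅, .empty, .empty, Finset.disjoint_empty_left ∅, rfl⟩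
      bddAbove_add_card_matchings
  obtain ⟨M, N, hM, hN, hMN, h⟩ := hmem
  exact ⟨_, _, ⟨M, N, hM, hN, hMN, rfl, rfl⟩, h⟩

lemma HasMatchingPair.le_gAlpha (h : HasMatchingPair G p q) (hpq : p + q = gLam G) :
    p ≤ gAlpha G := by
  obtain ⟨M, N, hM, hN, hMN, rfl, rfl⟩ := h
  refine le_csSup ⟨Nat.card V, ?_⟩ ⟨M, N, hM, hN, hMN, hpq, rfl⟩
  rintro _ ⟨K, K', hK, hK', hKK', -, rfl⟩
  have h : HasMatchingPair G K.card K'.card := ⟨K, K', hK, hK', hKK', rfl, rfl⟩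
  have := h.two_mul_le_card
  omega

lemma HasMatchingPair.lt_gAlpha {m : ℕ} (h : HasMatchingPair G p q) (hp : m < p)
    (hpq : 2 * m ≤ p + q) : m < gAlpha G := by
  obtain ⟨a, b, hab, hsum⟩ := exists_hasMatchingPair_add_eq_gLam G
  by_contra! hα
  have ha : a ≤ gAlpha G := hab.le_gAlpha hsum
  have hb : b ≤ gAlpha G := hab.symm.le_gAlpha (by omega)
  have hle : p + q ≤ gLam G := h.add_le_gLam
  have hp' : p ≤ gAlpha G := h.le_gAlpha (by omega)
  omega

end Finite

end MatchingPair

section Spanner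

instance : DecidableRel Spanner10.Adj :=
  inferInstanceAs (DecidableRel (fromEdgeSet _).Adj)

-- Mathlib's instance for `edge` is defined through `rw`, so `decide` gets stuck on it.
instance {V : Type*} [DecidableEq V] (s t : V) : DecidableRel (edge s t).Adj :=
  inferInstanceAs (DecidableRel (fromEdgeSet _).Adj)

instance {V W : Type*} {G : SimpleGraph V} {H : SimpleGraph W} [DecidableRel G.Adj]
    [DecidableRel H.Adj] : DecidableRel (G ⊕g H).Adj
  | .inl a, .inl b => inferInstanceAs (Decidable (G.Adj a b))
  | .inr a, .inr b => inferInstanceAs (Decidable (H.Adj a b))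
  | .inl _, .inr _ | .inr _, .inl _ => .isFalse Bool.false_ne_true

/-- The automorphism of the spanner reversing the path `a₁a₂a₃a₄a₅` and fixing `b₁b₂b₃b₄b₅`. -/
def spannerFlip : Spanner10 ≃g Spanner10 where
  toFun := ![4, 3, 2, 1, 0, 5, 6, 7, 8, 9]
  invFun := ![4, 3, 2, 1, 0, 5, 6, 7, 8, 9]
  left_inv := by decide
  right_inv := by decide
  map_rel_iff' {i j} := by revert i j; decide

/-- The automorphism of the spanner exchanging `aᵢ` and `bᵢ` for each `i`. -/
def spannerSwap : Spanner10 ≃g Spanner10 where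
  toFun := ![5, 6, 7, 8, 9, 0, 1, 2, 3, 4]
  invFun := ![5, 6, 7, 8, 9, 0, 1, 2, 3, 4]
  left_inv := by decide
  right_inv := by decide
  map_rel_iff' {i j} := by revert i j; decide

lemma exists_spanner_iso_apply_eq (i : Fin 10) :
    ∃ σ : Spanner10 ≃g Spanner10, ∃ j ≤ 2, σ j = i := by
  have key : ∀ i : Fin 10, (∃ j ≤ 2, j = i) ∨ (∃ j ≤ 2, spannerFlip j = i) ∨
      (∃ j ≤ 2, spannerSwap j = i) ∨ ∃ j ≤ 2, spannerSwap (spannerFlip j) = i := by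
    decide
  rcases key i with h | h | h | h
  · exact ⟨.refl, h⟩
  · exact ⟨spannerFlip, h⟩
  · exact ⟨spannerSwap, h⟩
  · exact ⟨spannerFlip.trans spannerSwap, h⟩

lemma hasMatchingPair_spanner : HasMatchingPair Spanner10 4 4 :=
  ⟨{s(0, 1), s(2, 3), s(5, 6), s(7, 8)}, {s(1, 2), s(3, 4), s(6, 7), s(8, 9)}, by decide +kernel⟩

-- The second matching links four edges of the first, perfect one into an alternating path.
lemma hasMatchingPair_spanner_sup_edge {x : Fin 10} (hx : ¬Spanner10.Adj 1 x) (hx1 : x ≠ 1) :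
    HasMatchingPair (Spanner10 ⊔ edge 0 2 ⊔ edge 1 x) 5 3 :=
  match x, hx, hx1 with
  | 0, hx, _ | 2, hx, _ => absurd (by decide) hx
  | 1, _, hx1 => absurd rfl hx1
  | 3, _, _ => ⟨{s(4, 3), s(1, 0), s(2, 7), s(8, 9), s(5, 6)}, {s(3, 1), s(0, 2), s(7, 8)},
      by decide +kernel⟩
  | 4, _, _ => ⟨{s(3, 4), s(1, 0), s(2, 7), s(8, 9), s(5, 6)}, {s(4, 1), s(0, 2), s(7, 8)},
      by decide +kernel⟩
  | 5, _, _ => ⟨{s(9, 8), s(7, 6), s(5, 1), s(0, 2), s(3, 4)}, {s(6, 5), s(1, 0), s(2, 3)},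
      by decide +kernel⟩
  | 6, _, _ => ⟨{s(5, 6), s(1, 0), s(2, 7), s(8, 9), s(3, 4)}, {s(6, 1), s(0, 2), s(7, 8)},
      by decide +kernel⟩
  | 7, _, _ => ⟨{s(5, 6), s(7, 1), s(0, 2), s(3, 4), s(8, 9)}, {s(6, 7), s(1, 0), s(2, 3)},
      by decide +kernel⟩
  | 8, _, _ => ⟨{s(9, 8), s(1, 0), s(2, 7), s(6, 5), s(3, 4)}, {s(8, 1), s(0, 2), s(7, 6)},
      by decide +kernel⟩
  | 9, _, _ => ⟨{s(5, 6), s(7, 8), s(9, 1), s(0, 2), s(3, 4)}, {s(8, 9), s(1, 0), s(2, 3)},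
      by decide +kernel⟩

lemma hasMatchingPair_spanner_sum_spanner_sup_edge {j : Fin 10} (hj : j ≤ 2) :
    HasMatchingPair ((Spanner10 ⊕g Spanner10) ⊔ edge (.inl 0) (.inl 2) ⊔ edge (.inl 1) (.inr j))
      9 7 :=
  match j, hj with
  | 0, _ => ⟨
      {s(.inr 4, .inr 3), s(.inr 2, .inr 1), s(.inr 0, .inl 1), s(.inl 0, .inl 2),
        s(.inl 3, .inl 4), s(.inl 5, .inl 6), s(.inl 7, .inl 8), s(.inr 5, .inr 6),
        s(.inr 7, .inr 8)},
      {s(.inr 1, .inr 0), s(.inl 1, .inl 0), s(.inl 2, .inl 3), s(.inl 6, .inl 7),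
        s(.inl 8, .inl 9), s(.inr 6, .inr 7), s(.inr 8, .inr 9)},
      by decide +kernel⟩
  | 1, _ => ⟨
      {s(.inr 0, .inr 1), s(.inl 1, .inl 0), s(.inl 2, .inl 3), s(.inr 4, .inr 3),
        s(.inr 2, .inr 7), s(.inr 8, .inr 9), s(.inr 5, .inr 6), s(.inl 5, .inl 6),
        s(.inl 7, .inl 8)},
      {s(.inr 1, .inl 1), s(.inl 0, .inl 2), s(.inl 3, .inl 4), s(.inr 3, .inr 2),
        s(.inr 7, .inr 8), s(.inl 6, .inl 7), s(.inl 8, .inl 9)},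
      by decide +kernel⟩
  | 2, _ => ⟨
      {s(.inr 0, .inr 1), s(.inr 2, .inl 1), s(.inl 0, .inl 2), s(.inl 3, .inl 4),
        s(.inr 3, .inr 4), s(.inl 5, .inl 6), s(.inl 7, .inl 8), s(.inr 5, .inr 6),
        s(.inr 7, .inr 8)},
      {s(.inr 1, .inr 2), s(.inl 1, .inl 0), s(.inl 2, .inl 3), s(.inl 6, .inl 7),
        s(.inl 8, .inl 9), s(.inr 6, .inr 7), s(.inr 8, .inr 9)},
      by decide +kernel⟩

end Spanner

section SForest

variable {V W : Type*} {G F : SimpleGraph V}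

lemma neighborSet_apply_of_range_eq_supp {H : SimpleGraph W} (φ : H ↪g F)
    {c : F.ConnectedComponent} (hφ : Set.range φ = c.supp) (i : W) :
    F.neighborSet (φ i) = φ '' H.neighborSet i := by
  ext y
  constructor
  · intro hy
    have hi : φ i ∈ c.supp := hφ ▸ Set.mem_range_self i
    obtain ⟨j, rfl⟩ : y ∈ Set.range φ := hφ ▸ c.mem_supp_of_adj_mem_supp hi hy
    exact ⟨j, φ.map_adj_iff.1 hy, rfl⟩
  · rintro ⟨j, hj, rfl⟩
    exact φ.map_adj_iff.2 hj

lemma fdeg_apply_of_range_eq_supp {H : SimpleGraph W} (φ : H ↪g F)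
    {c : F.ConnectedComponent} (hφ : Set.range φ = c.supp) (i : W) :
    fdeg F (φ i) = fdeg H i := by
  rw [fdeg, neighborSet_apply_of_range_eq_supp φ hφ, Set.ncard_image_of_injective _ φ.injective,
    fdeg]

lemma connectedComponentMk_apply_of_range_eq_supp {f : W → V} {c : F.ConnectedComponent}
    (hf : Set.range f = c.supp) (i : W) : F.connectedComponentMk (f i) = c :=
  (hf ▸ Set.mem_range_self i : f i ∈ c.supp)

lemma exists_mem_commonNeighbors_of_dist_eq_two {u w : V} (h : F.dist u w = 2) :
    ∃ v, F.Adj u v ∧ F.Adj w v := by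
  have hedist : F.edist u w = 2 := (ENat.toNat_eq_iff two_ne_zero).1 h
  exact (edist_eq_two_iff.1 hedist).2.2

namespace IsSForest

lemma exists_embedding (hF : IsSForest F) (c : F.ConnectedComponent) :
    ∃ φ : Spanner10 ↪g F, Set.range φ = c.supp := by
  obtain ⟨e⟩ := hF c
  refine ⟨(Embedding.induce c.supp).comp e.symm.toEmbedding, ?_⟩
  have := e.symm.surjective.range_comp (Subtype.val : c.supp → V)
  rwa [Subtype.range_coe] at this

lemma exists_embedding_apply_eq (hF : IsSForest F) (x : V) :
    ∃ φ : Spanner10 ↪g F, Set.range φ = (F.connectedComponentMk x).supp ∧ ∃ j ≤ 2, φ j = x := by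
  obtain ⟨φ, hφ⟩ := hF.exists_embedding (F.connectedComponentMk x)
  obtain ⟨i, rfl⟩ : x ∈ Set.range φ := hφ ▸ rfl
  obtain ⟨σ, j, hj, rfl⟩ := exists_spanner_iso_apply_eq i
  exact ⟨φ.comp σ.toEmbedding, (σ.surjective.range_comp φ).trans hφ, j, hj, rfl⟩

lemma exists_embedding_of_dist_eq_two (hF : IsSForest F) {u v w : V} (hu : fdeg F u = 1)
    (huw : F.dist u w = 2) (huv : F.Adj u v) :
    ∃ φ : Spanner10 ↪g F, Set.range φ = (F.connectedComponentMk u).supp ∧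
      φ 0 = u ∧ φ 1 = v ∧ φ 2 = w := by
  obtain ⟨φ, hφ, j, hj, rfl⟩ := hF.exists_embedding_apply_eq u
  have hN := neighborSet_apply_of_range_eq_supp φ hφ
  have hleaf : ∀ j : Fin 10, j ≤ 2 → (Spanner10.neighborSet j).toFinset.card = 1 → j = 0 := by
    decide
  obtain rfl : j = 0 := by
    rw [fdeg_apply_of_range_eq_supp φ hφ, fdeg, Set.ncard_eq_toFinset_card'] at hu
    exact hleaf j hj hu
  have hN0 : Spanner10.neighborSet 0 = {1} := by ext i; revert i; decide
  have hN1 : Spanner10.neighborSet 1 = {0, 2} := by ext i; revert i; decide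
  have eq_of_adj {y : V} (hy : F.Adj (φ 0) y) : y = φ 1 := by
    have hy' : y ∈ F.neighborSet (φ 0) := hy
    rwa [hN, hN0, Set.image_singleton] at hy'
  obtain ⟨y, huy, hwy⟩ := exists_mem_commonNeighbors_of_dist_eq_two huw
  have hw : w ∈ F.neighborSet (φ 1) := eq_of_adj huy ▸ hwy.symm
  rw [hN, hN1, Set.image_pair] at hw
  refine ⟨φ, hφ, rfl, (eq_of_adj huv).symm, ?_⟩
  rcases hw with rfl | rfl
  · simp at huw
  · rfl

lemma card_eq [Finite V] (hF : IsSForest F) : Nat.card V = 10 * Nat.card F.ConnectedComponent := by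
  have := Fintype.ofFinite F.ConnectedComponent
  have hfiber (c : F.ConnectedComponent) : Nat.card {x // F.connectedComponentMk x = c} = 10 := by
    obtain ⟨e⟩ := hF c
    exact (Nat.card_congr e.toEquiv).trans (Nat.card_fin 10)
  calc Nat.card V = Nat.card (Σ c, {x // F.connectedComponentMk x = c}) :=
        (Nat.card_congr (Equiv.sigmaFiberEquiv F.connectedComponentMk)).symm
    _ = 10 * Nat.card F.ConnectedComponent := by
        simp only [Nat.card_sigma, hfiber, Finset.sum_const, Finset.card_univ,
          Nat.card_eq_fintype_card, smul_eq_mul, mul_comm]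

lemma gAlpha_le [Finite V] (hF : IsSForest F) (heq : 4 * gBeta G = 5 * gAlpha G) :
    gAlpha G ≤ 4 * Nat.card F.ConnectedComponent := by
  have := Fintype.ofFinite V
  have hβ : 2 * gBeta G ≤ Fintype.card V := two_mul_gBeta_le_card
  have hV := hF.card_eq
  rw [Nat.card_eq_fintype_card] at hV
  omega

lemma hasMatchingPair_induce_preimage (hF : IsSForest F) (hFG : F ≤ G)
    (T : Finset F.ConnectedComponent) :
    HasMatchingPair (G.induce (F.connectedComponentMk ⁻¹' T)) (4 * T.card) (4 * T.card) := by
  classical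
  induction T using Finset.induction with
  | empty => exact .zero
  | insert c T hc ih =>
    obtain ⟨φ, hφ⟩ := hF.exists_embedding c
    have hmem (i : Fin 10) : φ i ∈ F.connectedComponentMk ⁻¹' {c} :=
      connectedComponentMk_apply_of_range_eq_supp hφ i
    have hpair : HasMatchingPair (G.induce (F.connectedComponentMk ⁻¹' {c})) 4 4 :=
      hasMatchingPair_spanner.map (φ.toEmbedding.codRestrict _ hmem)
        fun _ _ h => hFG (φ.map_adj_iff.2 h)
    have hdisj : Disjoint (F.connectedComponentMk ⁻¹' {c}) (F.connectedComponentMk ⁻¹' T) :=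
      (Set.disjoint_singleton_left.2 hc).preimage _
    rw [Finset.coe_insert, Set.insert_eq, Set.preimage_union, Finset.card_insert_of_notMem hc,
      mul_add_one, add_comm]
    exact hpair.induce_union ih hdisj

-- Away from the components in `T` each spanner keeps its standard pair of `4`-edge matchings.
lemma four_mul_card_lt_gAlpha [Finite V] (hF : IsSForest F) (hFG : F ≤ G)
    (T : Finset F.ConnectedComponent) {H : SimpleGraph W} (f : W ↪ V)
    (hfT : ∀ a, F.connectedComponentMk (f a) ∈ T) (hH : H ≤ G.comap f) {p q : ℕ}
    (h : HasMatchingPair H p q) (hp : 4 * T.card < p) (hpq : 8 * T.card ≤ p + q) :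
    4 * Nat.card F.ConnectedComponent < gAlpha G := by
  classical
  have := Fintype.ofFinite F.ConnectedComponent
  have hin : HasMatchingPair (G.induce (F.connectedComponentMk ⁻¹' T)) p q :=
    h.map (f.codRestrict _ hfT) hH
  have hout := hF.hasMatchingPair_induce_preimage hFG Tᶜ
  have hdisj : Disjoint (F.connectedComponentMk ⁻¹' T)
      (F.connectedComponentMk ⁻¹' (Tᶜ : Finset F.ConnectedComponent)) :=
    (Finset.disjoint_coe.2 disjoint_compl_right).preimage _
  have hall : HasMatchingPair G (p + 4 * Tᶜ.card) (q + 4 * Tᶜ.card) :=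
    (hin.induce_union hout hdisj).map (Function.Embedding.subtype _) le_rfl
  have hcard : T.card + Tᶜ.card = Nat.card F.ConnectedComponent := by
    rw [Nat.card_eq_fintype_card, Finset.card_add_card_compl]
  exact hall.lt_gAlpha (by omega) (by omega)

section Triangle

variable [Finite V] (hF : IsSForest F) (hFG : F ≤ G)
  (hα : gAlpha G ≤ 4 * Nat.card F.ConnectedComponent) {c : F.ConnectedComponent}
  {φ : Spanner10 ↪g F} (hφ : Set.range φ = c.supp) (h02 : G.Adj (φ 0) (φ 2))
include hF hFG hα hφ h02

lemma spanner_adj_one_of_adj {x : Fin 10} (hx : G.Adj (φ 1) (φ x)) : Spanner10.Adj 1 x := by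
  by_contra hx'
  have hx1 : x ≠ 1 := by
    rintro rfl
    exact hx.ne rfl
  have hle : Spanner10 ⊔ edge 0 2 ⊔ edge 1 x ≤ G.comap φ :=
    sup_le (sup_le (fun _ _ h => hFG (φ.map_adj_iff.2 h)) ((edge_le_iff _).2 (.inr h02)))
      ((edge_le_iff _).2 (.inr hx))
  have hmem (i : Fin 10) : F.connectedComponentMk (φ i) ∈ ({c} : Finset F.ConnectedComponent) :=
    Finset.mem_singleton.2 (connectedComponentMk_apply_of_range_eq_supp hφ i)
  exact hα.not_gt <| hF.four_mul_card_lt_gAlpha hFG {c} φ.toEmbedding hmem hle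
    (hasMatchingPair_spanner_sup_edge hx' hx1) (by simp) (by simp)

lemma connectedComponentMk_eq_of_adj {x : V} (hx : G.Adj (φ 1) x) :
    F.connectedComponentMk x = c := by
  classical
  by_contra hxc
  obtain ⟨ψ, hψ, j, hj, rfl⟩ := hF.exists_embedding_apply_eq x
  have hφc := connectedComponentMk_apply_of_range_eq_supp hφ
  have hψd := connectedComponentMk_apply_of_range_eq_supp hψ
  have hinj : Function.Injective (Sum.elim φ ψ) := by
    refine φ.injective.sumElim ψ.injective fun a b hab => hxc ?_
    rw [← hφc a, hab, hψd b]
  have hsum : Spanner10 ⊕g Spanner10 ≤ G.comap (Sum.elim φ ψ) :=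
    sum_le_comap_sumElim (fun _ _ h => hFG (φ.map_adj_iff.2 h))
      fun _ _ h => hFG (ψ.map_adj_iff.2 h)
  have hle : (Spanner10 ⊕g Spanner10) ⊔ edge (.inl 0) (.inl 2) ⊔ edge (.inl 1) (.inr j) ≤
      G.comap (Sum.elim φ ψ) :=
    sup_le (sup_le hsum ((edge_le_iff _).2 (.inr h02))) ((edge_le_iff _).2 (.inr hx))
  have hmem (a : Fin 10 ⊕ Fin 10) : F.connectedComponentMk (Sum.elim φ ψ a) ∈
      ({c, F.connectedComponentMk (ψ j)} : Finset F.ConnectedComponent) := by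
    cases a with
    | inl i => exact Finset.mem_insert.2 (.inl (hφc i))
    | inr i => exact Finset.mem_insert.2 (.inr (Finset.mem_singleton.2 (hψd i)))
  have hcard : ({c, F.connectedComponentMk (ψ j)} : Finset F.ConnectedComponent).card = 2 :=
    Finset.card_pair (Ne.symm hxc)
  exact hα.not_gt <| hF.four_mul_card_lt_gAlpha hFG _ ⟨_, hinj⟩ hmem hle
    (hasMatchingPair_spanner_sum_spanner_sup_edge hj) (by omega) (by omega)

lemma adj_one_of_adj {x : V} (hx : G.Adj (φ 1) x) : F.Adj (φ 1) x := by
  have hxc : x ∈ c.supp := hF.connectedComponentMk_eq_of_adj hFG hα hφ h02 hx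
  obtain ⟨i, rfl⟩ : x ∈ Set.range φ := hφ ▸ hxc
  exact φ.map_adj_iff.2 (hF.spanner_adj_one_of_adj hFG hα hφ h02 hx)

end Triangle

end IsSForest

lemma notMem_of_mem_BSet {v : V} (hv : fdeg F v = 2) (hvF : ∀ x, G.Adj v x → F.Adj v x)
    {e : Sym2 V} (he : e ∈ BSet G F) : v ∉ e := by
  intro hve
  obtain ⟨x, rfl⟩ := Sym2.mem_iff_exists.1 hve
  obtain ⟨heG, heF⟩ := he
  have hU : s(v, x) ∉ USet F := fun h => heF (.inl (.inl h))
  exact heF (.inl (.inr ⟨hvF x heG, hU, v, hve, hv⟩))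

end SForest

/-- if `β(G)/α(G) = 5/4`, `F` is any spanning S-forest of `G`, `u` is a
1-vertex of `F` with base `w`, and `(u, w)` is an edge of `G`, then the 2-vertex `v` of
`F` adjacent to `u` in `F` is incident to no edge from `B(G, F)`; equivalently, every
edge of `G` incident to `v` belongs to `F`. -/
theorem stmt17 {V : Type*} [Fintype V] [DecidableEq V] (G F : SimpleGraph V)
    (hiso : ∀ x : V, ∃ y : V, G.Adj x y)
    (heq : 4 * gBeta G = 5 * gAlpha G)
    (hFG : F ≤ G) (hF : IsSForest F) (u w v : V)
    (hu : fdeg F u = 1) (hw : IsBase F u w) (huw : G.Adj u w)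
    (hvadj : F.Adj u v) (hv2 : fdeg F v = 2) :
    (∀ e ∈ BSet G F, v ∉ e) ∧ (∀ x : V, G.Adj v x → F.Adj v x) := by
  have hadj : ∀ x : V, G.Adj v x → F.Adj v x := by
    obtain ⟨φ, hφ, rfl, rfl, rfl⟩ := hF.exists_embedding_of_dist_eq_two hu hw.2 hvadj
    exact fun x hx => hF.adj_one_of_adj hFG (hF.gAlpha_le heq) hφ huw hx
  exact ⟨fun e he => notMem_of_mem_BSet hv2 hadj he, hadj⟩
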